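/- arXiv:1911.04964 — 8 statements merged into one kernel-verified Lean document; each statement's English description precedes it below -/
import Mathlib

section
/- Conservation of Bias: Let D be a probability distribution over a set F of information resources and let τ_k denote the collection of all target sets t ⊆ Ω with |t| = k. Then for any fixed assignment f ↦ P̄_f of averaged probability distributions, ∑_{t ∈ τ_k} bias(D, t) = 0. -/
/-!
By linearity of the integral, the sum of the expected success probabilities over all `k`-subsets
is `∑ t, ∑ ω ∈ t, g ω` with `g ω = E_D[P̄_F ω]`. Exchanging the two sums, each `ω` is counted once
for every `k`-subset containing it, that is `C(n-1, k-1)` times, and `∑ ω, g ω = 1`. The subtracted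
terms contribute `C(n, k) * k / n`, which is the same number.
-/

open MeasureTheory

/-- **Conservation of Bias.**
For any fixed assignment `f ↦ P̄_f` and any distribution `D` over information
resources, the biases over all size-`k` target sets sum to zero:
`∑_{t ∈ τ_k} bias(D,t) = 0`, where `bias(D,t) = E_D[∑ ω ∈ t, P̄_F ω] - k/|Ω|`. -/
theorem conservation_of_bias
    {Ω F : Type*} [Fintype Ω] [MeasurableSpace F]
    (Pbar : F → Ω → ℝ)
    (hP0 : ∀ f ω, 0 ≤ Pbar f ω)
    (hP1 : ∀ f, ∑ ω, Pbar f ω = 1)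
    (D : Measure F) [IsProbabilityMeasure D]
    (hint : ∀ ω, Integrable (fun f => Pbar f ω) D)
    (k : ℕ) (hk1 : 1 ≤ k) (hk2 : k ≤ Fintype.card Ω) :
    ∑ t ∈ Finset.powersetCard k (Finset.univ : Finset Ω),
      ((∫ f, (∑ ω ∈ t, Pbar f ω) ∂D) - (k : ℝ) / (Fintype.card Ω)) = 0 := by
  classical
  have hg : ∑ ω, ∫ f, Pbar f ω ∂D = 1 := by
    rw [← integral_finsetSum _ fun ω _ => hint ω]
    simp [hP1]
  have hcount : ∀ ω : Ω, (((Finset.powersetCard k (Finset.univ : Finset Ω)).filter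
      fun t => ω ∈ t).card : ℝ) = ((Fintype.card Ω - 1).choose (k - 1) : ℕ) := by
    intro ω
    have h := Finset.card_filter_powersetCard_subset {ω} (Finset.univ : Finset Ω) k
      (Finset.subset_univ _) (by simpa using hk1)
    simp only [Finset.singleton_subset_iff, Finset.card_singleton, Finset.card_univ] at h
    exact_mod_cast h
  have hswap : ∑ t ∈ Finset.powersetCard k (Finset.univ : Finset Ω), ∑ ω ∈ t, ∫ f, Pbar f ω ∂D
      = ((Fintype.card Ω - 1).choose (k - 1) : ℕ) := by
    rw [Finset.sum_comm' (t' := Finset.univ)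
      (s' := fun ω => (Finset.powersetCard k Finset.univ).filter fun t => ω ∈ t) (by simp)]
    simp only [Finset.sum_const, nsmul_eq_mul, hcount]
    rw [← Finset.mul_sum, hg, mul_one]
  have hint_sum : ∀ t : Finset Ω, ∫ f, (∑ ω ∈ t, Pbar f ω) ∂D = ∑ ω ∈ t, ∫ f, Pbar f ω ∂D :=
    fun t => integral_finsetSum _ fun ω _ => hint ω
  rw [Finset.sum_sub_distrib]
  simp only [hint_sum]
  rw [hswap, Finset.sum_const, Finset.card_powersetCard, Finset.card_univ, nsmul_eq_mul]
  obtain ⟨m, hm⟩ : ∃ m, Fintype.card Ω = m + 1 := ⟨Fintype.card Ω - 1, by omega⟩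
  obtain ⟨j, rfl⟩ : ∃ j, k = j + 1 := ⟨k - 1, by omega⟩
  rw [hm, Nat.add_sub_cancel, Nat.add_sub_cancel, ← mul_div_assoc, ← Nat.cast_mul,
    ← Nat.add_one_mul_choose_eq, Nat.cast_mul, mul_div_cancel_left₀ _ (by positivity), sub_self]
end

section
/- Famine of Favorable Information Resources: Let B be a finite nonempty set of information resources, let t ⊆ Ω be a fixed target set with |t| = k, and for q_min ∈ (0,1] define B_{q_min} = { f ∈ B : q(t,f) ≥ q_min }. Then |B_{q_min}| / |B| ≤ (p + bias(B, t)) / q_min, where p = k/|Ω|. -/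
/-!
The quantity `p + bias` is the mean of `q(t, f) = ∑ ω ∈ t, Pbar f ω` over `f` uniform in `B`,
because the two occurrences of `p` cancel. As `q(t, f)` is nonnegative, the bound is the
Markov inequality: each favorable `f` contributes at least `qmin` to the sum of `q(t, f)` over `B`.
-/

open scoped Classical

/-- **Famine of Favorable Information Resources.**
For a finite nonempty set `B` of information resources and a fixed target set
`t` of size `k`, the proportion of `f ∈ B` with `q(t,f) ≥ q_min` is at most
`(p + bias(B,t))/q_min`, where `bias(B,t) = (1/|B|)∑_{f∈B} q(t,f) - p` and
`p = k/|Ω|`. -/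
theorem famine_of_favorable_information_resources
    {Ω F : Type*} [Fintype Ω]
    (Pbar : F → Ω → ℝ)
    (hP0 : ∀ f ω, 0 ≤ Pbar f ω)
    (hP1 : ∀ f, ∑ ω, Pbar f ω = 1)
    (B : Finset F) (hB : B.Nonempty)
    (t : Finset Ω) (k : ℕ) (hk : t.card = k)
    (qmin : ℝ) (hqmin : qmin ∈ Set.Ioc (0 : ℝ) 1)
    (p bias : ℝ)
    (hp : p = (k : ℝ) / (Fintype.card Ω))
    (hbias : bias = (1 / (B.card : ℝ)) * (∑ f ∈ B, ∑ ω ∈ t, Pbar f ω) - p) :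
    ((B.filter fun f => qmin ≤ ∑ ω ∈ t, Pbar f ω).card : ℝ) / (B.card : ℝ)
      ≤ (p + bias) / qmin := by
  have markov : ((B.filter fun f => qmin ≤ ∑ ω ∈ t, Pbar f ω).card : ℝ) * qmin
      ≤ ∑ f ∈ B, ∑ ω ∈ t, Pbar f ω := by
    calc ((B.filter fun f => qmin ≤ ∑ ω ∈ t, Pbar f ω).card : ℝ) * qmin
        = ∑ _f ∈ B.filter fun f => qmin ≤ ∑ ω ∈ t, Pbar f ω, qmin := by
          rw [Finset.sum_const, nsmul_eq_mul]
      _ ≤ ∑ f ∈ B.filter fun f => qmin ≤ ∑ ω ∈ t, Pbar f ω, ∑ ω ∈ t, Pbar f ω :=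
          Finset.sum_le_sum fun f hf => (Finset.mem_filter.mp hf).2
      _ ≤ ∑ f ∈ B, ∑ ω ∈ t, Pbar f ω :=
          Finset.sum_le_sum_of_subset_of_nonneg (Finset.filter_subset _ _)
            fun f _ _ => Finset.sum_nonneg fun ω _ => hP0 f ω
  have mean : p + bias = (∑ f ∈ B, ∑ ω ∈ t, Pbar f ω) / (B.card : ℝ) := by
    rw [hbias]; ring
  rw [mean, le_div_iff₀ hqmin.1, div_mul_eq_mul_div]
  exact div_le_div_of_nonneg_right markov (Nat.cast_nonneg _)
end

section
/- Proportion of Successful Problems Under Bias-Free Search: Let B be a finite nonempty set of information resources and t ⊆ Ω a fixed target set with |t| = k. If bias(B, t) = 0, then for any q_min ∈ (0,1], |{ f ∈ B : q(t,f) ≥ q_min }| / |B| ≤ p / q_min, where p = k/|Ω|. -/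
/-!
Zero bias says that the average of `q(t, f)` over `f ∈ B` is exactly `p`. The bound is then
Markov's inequality for the nonnegative function `f ↦ q(t, f)` under the uniform distribution
on `B`.
-/

open scoped Classical

/-- **Proportion of Successful Problems Under Bias-Free Search.**
If `bias(B,t) = 0`, the proportion of `f ∈ B` with `q(t,f) ≥ q_min` is at most
`p / q_min`, where `p = k/|Ω|`. -/
theorem proportion_of_successful_problems_under_bias_free_search
    {Ω F : Type*} [Fintype Ω]
    (Pbar : F → Ω → ℝ)
    (hP0 : ∀ f ω, 0 ≤ Pbar f ω)
    (hP1 : ∀ f, ∑ ω, Pbar f ω = 1)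
    (B : Finset F) (hB : B.Nonempty)
    (t : Finset Ω) (k : ℕ) (hk : t.card = k)
    (qmin : ℝ) (hqmin : qmin ∈ Set.Ioc (0 : ℝ) 1)
    (p bias : ℝ)
    (hp : p = (k : ℝ) / (Fintype.card Ω))
    (hbias : bias = (1 / (B.card : ℝ)) * (∑ f ∈ B, ∑ ω ∈ t, Pbar f ω) - p)
    (hbias0 : bias = 0) :
    ((B.filter fun f => qmin ≤ ∑ ω ∈ t, Pbar f ω).card : ℝ) / (B.card : ℝ)
      ≤ p / qmin := by
  have hBpos : (0 : ℝ) < B.card := by exact_mod_cast hB.card_pos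
  have hmean : ∑ f ∈ B, ∑ ω ∈ t, Pbar f ω = p * B.card := by
    rw [hbias0] at hbias
    field_simp at hbias
    linarith
  -- Bound `q` below by `qmin` on the successful resources and by `0` on the others.
  have hmarkov : ((B.filter fun f => qmin ≤ ∑ ω ∈ t, Pbar f ω).card : ℝ) * qmin
      ≤ ∑ f ∈ B, ∑ ω ∈ t, Pbar f ω := by
    rw [← nsmul_eq_mul]
    refine (Finset.card_nsmul_le_sum _ (fun f => ∑ ω ∈ t, Pbar f ω) _
      fun f hf => (Finset.mem_filter.mp hf).2).trans ?_
    exact Finset.sum_le_sum_of_subset_of_nonneg (Finset.filter_subset _ _)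
      fun f _ _ => Finset.sum_nonneg fun ω _ => hP0 f ω
  rw [div_le_div_iff₀ hBpos hqmin.1, ← hmean]
  exact hmarkov
end

section
/- Famine of Applicable Targets: Let D be a probability distribution over a set of information resources. Let τ_k = { t ⊆ Ω : |t| = k } and, for q_min ∈ (0,1], let τ_{q_min} = { t ∈ τ_k : bias(D, t) ≥ q_min }. Then |τ_{q_min}| / |τ_k| ≤ p/(p + q_min) ≤ p/q_min, where p = k/|Ω|. -/
/-!
The averaged success probabilities `g ω = E_{F∼D}[P̄_F(ω)]` again form a probability distribution
on `Ω`, and `bias(D, t) = ∑_{ω ∈ t} g ω - p`. Each `ω` lies in a fraction `p = k / n` of the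
`k`-subsets, so the average of `∑_{ω ∈ t} g ω` over all `k`-subsets `t` is exactly `p`
(`sum_powersetCard_sum`). Markov's inequality at level `p + q_min` for a uniformly random
`k`-subset then gives the bound `p / (p + q_min)`.
-/


open MeasureTheory
open scoped Classical

/-- Double counting: `ω` belongs to `(n - 1).choose (k - 1)` of the `k`-subsets, which is a
fraction `k / n` of them. The identity is cleared of denominators. -/
lemma sum_powersetCard_sum {Ω : Type*} [Fintype Ω] (g : Ω → ℝ) (k : ℕ) (hk1 : 1 ≤ k)
    (hk2 : k ≤ Fintype.card Ω) :
    (Fintype.card Ω : ℝ) * ∑ t ∈ Finset.powersetCard k (Finset.univ : Finset Ω), ∑ ω ∈ t, g ω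
      = k * (Finset.powersetCard k (Finset.univ : Finset Ω)).card * ∑ ω, g ω := by
  have hcount (ω : Ω) : ((Finset.powersetCard k (Finset.univ : Finset Ω)).filter
      (fun t => ω ∈ t)).card = (Fintype.card Ω - 1).choose (k - 1) := by
    have h := Finset.card_filter_powersetCard_subset {ω} (Finset.univ : Finset Ω) k
      (Finset.subset_univ _) (by simpa using hk1)
    simpa using h
  have hswap : ∑ t ∈ Finset.powersetCard k (Finset.univ : Finset Ω), ∑ ω ∈ t, g ω
      = (Fintype.card Ω - 1).choose (k - 1) * ∑ ω, g ω := by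
    calc _ = ∑ t ∈ Finset.powersetCard k (Finset.univ : Finset Ω),
          ∑ ω, if ω ∈ t then g ω else 0 := by simp
      _ = _ := by
        rw [Finset.sum_comm, Finset.mul_sum]
        refine Finset.sum_congr rfl fun ω _ => ?_
        rw [← Finset.sum_filter, Finset.sum_const, hcount, nsmul_eq_mul]
  have hchoose : Fintype.card Ω * (Fintype.card Ω - 1).choose (k - 1)
      = (Fintype.card Ω).choose k * k := by
    have h := Nat.add_one_mul_choose_eq (Fintype.card Ω - 1) (k - 1)
    rwa [Nat.sub_add_cancel hk1, Nat.sub_add_cancel (hk1.trans hk2)] at h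
  have hchoose' : (Fintype.card Ω : ℝ) * ((Fintype.card Ω - 1).choose (k - 1) : ℕ)
      = ((Fintype.card Ω).choose k : ℕ) * k := by exact_mod_cast hchoose
  rw [hswap, ← mul_assoc, hchoose', Finset.card_powersetCard, Finset.card_univ]
  ring

/-- **Famine of Applicable Targets.**
With `τ_k` the collection of all size-`k` target sets and
`τ_{q_min} = {t ∈ τ_k : bias(D,t) ≥ q_min}`, we have
`|τ_{q_min}|/|τ_k| ≤ p/(p + q_min) ≤ p/q_min`, where `p = k/|Ω|`. -/
theorem famine_of_applicable_targets
    {Ω F : Type*} [Fintype Ω] [MeasurableSpace F]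
    (Pbar : F → Ω → ℝ)
    (hP0 : ∀ f ω, 0 ≤ Pbar f ω)
    (hP1 : ∀ f, ∑ ω, Pbar f ω = 1)
    (D : Measure F) [IsProbabilityMeasure D]
    (hint : ∀ ω, Integrable (fun f => Pbar f ω) D)
    (k : ℕ) (hk1 : 1 ≤ k) (hk2 : k ≤ Fintype.card Ω)
    (qmin : ℝ) (hqmin : qmin ∈ Set.Ioc (0 : ℝ) 1)
    (p : ℝ) (hp : p = (k : ℝ) / (Fintype.card Ω)) :
    (((Finset.powersetCard k (Finset.univ : Finset Ω)).filter fun t =>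
        qmin ≤ (∫ f, (∑ ω ∈ t, Pbar f ω) ∂D) - p).card : ℝ) /
      ((Finset.powersetCard k (Finset.univ : Finset Ω)).card : ℝ)
        ≤ p / (p + qmin)
    ∧ p / (p + qmin) ≤ p / qmin := by
  obtain ⟨hq0, -⟩ := hqmin
  have hn : (0 : ℝ) < Fintype.card Ω := by exact_mod_cast hk1.trans hk2
  have hk : (0 : ℝ) < k := by exact_mod_cast hk1
  have hp0 : 0 < p := hp ▸ div_pos hk hn
  refine ⟨?_, div_le_div_of_nonneg_left hp0.le hq0 (by linarith)⟩
  set T := Finset.powersetCard k (Finset.univ : Finset Ω) with hT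
  have hTpos : (0 : ℝ) < T.card := by
    exact_mod_cast Finset.card_pos.2 (Finset.powersetCard_nonempty.2 (by simpa using hk2))
  have hswap (t : Finset Ω) : ∫ f, ∑ ω ∈ t, Pbar f ω ∂D = ∑ ω ∈ t, ∫ f, Pbar f ω ∂D :=
    integral_finsetSum t fun ω _ => hint ω
  have hg0 (ω : Ω) : 0 ≤ ∫ f, Pbar f ω ∂D := integral_nonneg fun f => hP0 f ω
  have hg1 : ∑ ω, ∫ f, Pbar f ω ∂D = 1 := by
    rw [← hswap]
    simp [hP1]
  have hmean : ∑ t ∈ T, ∑ ω ∈ t, ∫ f, Pbar f ω ∂D = p * T.card := by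
    have h := sum_powersetCard_sum (fun ω => ∫ f, Pbar f ω ∂D) k hk1 hk2
    rw [hg1, mul_one, ← hT] at h
    rw [hp, div_mul_eq_mul_div, eq_div_iff hn.ne', mul_comm, h]
  rw [div_le_div_iff₀ hTpos (by linarith), ← hmean]
  -- Markov's inequality for the uniform distribution on `T`
  rw [← nsmul_eq_mul]
  refine (Finset.card_nsmul_le_sum _ (fun t => ∑ ω ∈ t, ∫ f, Pbar f ω ∂D) _ fun t ht => ?_).trans
    (Finset.sum_le_sum_of_subset_of_nonneg (Finset.filter_subset _ _)
      fun t _ _ => Finset.sum_nonneg fun ω _ => hg0 ω)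
  have h := (Finset.mem_filter.1 ht).2
  rw [hswap] at h
  linarith
end

section
/- Famine of Favorable Biasing Distributions: Let B be a finite set of information resources with |B| = m, let t ⊆ Ω be a fixed target set with |t| = k, and let P = { D ∈ ℝ^m : D(f) ≥ 0 for all f ∈ B, ∑_{f∈B} D(f) = 1 } be the standard simplex of distributions over B, equipped with the (m−1)-dimensional Lebesgue measure μ on the affine hyperplane containing P. For q_min ∈ (0,1], let G_{t,q_min} = { D ∈ P : bias(D, t) ≥ q_min }. Then μ(G_{t,q_min}) / μ(P) ≤ (p + bias(B, t)) / q_min, where p = k/|Ω|. -/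
/-!
The proof is Markov's inequality on the simplex. Since `p ≥ 0`, every `D ∈ G` satisfies
`qmin ≤ ∑ f, D f * q f`, where `q f` is the mass that `Pbar f` gives to `t`. Swapping two
coordinates is an isometry of Euclidean space that preserves the simplex, hence preserves its
Hausdorff measure, so all coordinates have the same integral over the simplex
(`setIntegral_coord_eq`); as they sum to `1`, this integral is `μ(P) / m`. Therefore
`∫_P ∑ f, D f * q f = μ(P) * (1 / m) * ∑ f, q f = μ(P) * (p + bias(B, t))`.
-/

open MeasureTheory

/-- The standard simplex in `EuclideanSpace ℝ B`. -/
def stdSimp (B : Type*) [Fintype B] : Set (EuclideanSpace ℝ B) :=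
  {D | (∀ f, 0 ≤ D f) ∧ ∑ f, D f = 1}

lemma measurableSet_stdSimp (B : Type*) [Fintype B] : MeasurableSet (stdSimp B) := by
  apply IsClosed.measurableSet
  refine IsClosed.inter (s₁ := {D : EuclideanSpace ℝ B | ∀ f, 0 ≤ D f})
    (s₂ := {D : EuclideanSpace ℝ B | ∑ f, D f = 1}) ?_ ?_
  · simp only [Set.ofPred_forall]
    exact isClosed_iInter fun f => isClosed_le (by fun_prop) (by fun_prop)
  · exact isClosed_eq (by fun_prop) (by fun_prop)

lemma setIntegral_coord_eq {B : Type*} [Fintype B] (d : ℝ) (f g : B) :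
    ∫ D in stdSimp B, D f ∂μH[d] = ∫ D in stdSimp B, D g ∂μH[d] := by
  classical
  let e : EuclideanSpace ℝ B ≃ᵢ EuclideanSpace ℝ B :=
    (LinearIsometryEquiv.piLpCongrLeft 2 ℝ ℝ (Equiv.swap f g)).toIsometryEquiv
  have he : ∀ D i, e D i = D (Equiv.swap f g i) := by
    intro D i
    simp [e, LinearIsometryEquiv.piLpCongrLeft_apply, Equiv.piCongrLeft'_apply]
  have hpre : e ⁻¹' stdSimp B = stdSimp B := by
    ext D
    simp only [stdSimp, Set.mem_preimage, Set.mem_ofPred_eq, he]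
    rw [Equiv.sum_comp (Equiv.swap f g) (fun i => D i)]
    refine and_congr_left fun _ => ⟨fun h i => ?_, fun h i => h _⟩
    simpa using h (Equiv.swap f g i)
  have h := (e.measurePreserving_hausdorffMeasure d).setIntegral_preimage_emb
    e.toHomeomorph.measurableEmbedding (fun D => D g) (stdSimp B)
  rw [hpre] at h
  simpa [he] using h

lemma integrableOn_coord {B : Type*} [Fintype B] (d : ℝ) (f : B)
    (hfin : μH[d] (stdSimp B) ≠ ⊤) :
    IntegrableOn (fun D : EuclideanSpace ℝ B => D f) (stdSimp B) μH[d] := by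
  refine Measure.integrableOn_of_bounded (M := 1) hfin
    (Continuous.aestronglyMeasurable (by fun_prop)) ?_
  filter_upwards [ae_restrict_mem (measurableSet_stdSimp B)] with D hD
  rw [Real.norm_of_nonneg (hD.1 f), ← hD.2]
  exact Finset.single_le_sum (f := fun i => D i) (fun i _ => hD.1 i) (Finset.mem_univ f)

lemma card_mul_setIntegral_coord {B : Type*} [Fintype B] (d : ℝ) (f : B)
    (hfin : μH[d] (stdSimp B) ≠ ⊤) :
    (Fintype.card B : ℝ) * ∫ D in stdSimp B, D f ∂μH[d] = (μH[d] (stdSimp B)).toReal := by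
  calc (Fintype.card B : ℝ) * ∫ D in stdSimp B, D f ∂μH[d]
      = ∑ g, ∫ D in stdSimp B, D g ∂μH[d] := by
        rw [Finset.sum_congr rfl fun g _ => setIntegral_coord_eq d g f]
        simp
    _ = ∫ D in stdSimp B, ∑ g, D g ∂μH[d] :=
        (integral_finsetSum _ fun g _ => integrableOn_coord d g hfin).symm
    _ = ∫ D in stdSimp B, (1 : ℝ) ∂μH[d] :=
        setIntegral_congr_fun (measurableSet_stdSimp B) fun D hD => hD.2
    _ = (μH[d] (stdSimp B)).toReal := by simp [Measure.real]


/-- **Famine of Favorable Biasing Distributions.**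
Let `P` be the standard simplex of distributions over a finite set `B` of
information resources (`|B| = m`), viewed inside `EuclideanSpace ℝ B` and
equipped with the `(m-1)`-dimensional Hausdorff (Lebesgue) measure on the
affine hyperplane containing it.  For `G_{t,q_min} = {D ∈ P : bias(D,t) ≥ q_min}`,
`μ(G_{t,q_min})/μ(P) ≤ (p + bias(B,t))/q_min`. -/
theorem famine_of_favorable_biasing_distributions
    {Ω B : Type*} [Fintype Ω] [Fintype B]
    (m : ℕ) (hm : Fintype.card B = m)
    (Pbar : B → Ω → ℝ)
    (hP0 : ∀ f ω, 0 ≤ Pbar f ω)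
    (hP1 : ∀ f, ∑ ω, Pbar f ω = 1)
    (t : Finset Ω) (k : ℕ) (hk : t.card = k)
    (p : ℝ) (hp : p = (k : ℝ) / (Fintype.card Ω))
    (qmin : ℝ) (hqmin : qmin ∈ Set.Ioc (0 : ℝ) 1)
    (biasB : ℝ)
    (hbiasB : biasB = (1 / (m : ℝ)) * (∑ f, ∑ ω ∈ t, Pbar f ω) - p)
    (Pset G : Set (EuclideanSpace ℝ B))
    (hPset : Pset = {D | (∀ f, 0 ≤ D f) ∧ ∑ f, D f = 1})
    (hG : G = {D ∈ Pset | qmin ≤ (∑ f, D f * ∑ ω ∈ t, Pbar f ω) - p}) :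
    (μH[(m : ℝ) - 1] G).toReal / (μH[(m : ℝ) - 1] Pset).toReal
      ≤ (p + biasB) / qmin := by
  have hq0 : ∀ f, 0 ≤ ∑ ω ∈ t, Pbar f ω := fun f => Finset.sum_nonneg fun ω _ => hP0 f ω
  generalize hq : (fun f => ∑ ω ∈ t, Pbar f ω) = q at *
  have hq' : ∀ f, ∑ ω ∈ t, Pbar f ω = q f := fun f => congrFun hq f
  simp only [hq'] at *
  have hp0 : 0 ≤ p := by rw [hp]; positivity
  have hR : p + biasB = (1 / (m : ℝ)) * ∑ f, q f := by rw [hbiasB]; ring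
  have hS : 0 ≤ ∑ f, q f := Finset.sum_nonneg fun f _ => hq0 f
  have hqpos := hqmin.1
  rw [hR]
  change Pset = stdSimp B at hPset
  subst hPset
  -- A null or infinite simplex makes the left-hand side `0`, since `⊤.toReal = 0`.
  rcases (ENNReal.toReal_nonneg (a := μH[(m : ℝ) - 1] (stdSimp B))).eq_or_lt' with h0 | hpos
  · rw [h0, div_zero]
    positivity
  have hfin : μH[(m : ℝ) - 1] (stdSimp B) ≠ ⊤ := (ENNReal.toReal_pos_iff.1 hpos).2.ne
  have hm0 : (m : ℝ) ≠ 0 := by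
    rintro h
    have : IsEmpty B := by
      rw [← Fintype.card_eq_zero_iff, hm]; exact_mod_cast h
    have hE : stdSimp B = ∅ := by
      ext D; simp [stdSimp]
    simp [hE] at hpos
  have hint : Integrable (fun D : EuclideanSpace ℝ B => ∑ f, D f * q f)
      (μH[(m : ℝ) - 1].restrict (stdSimp B)) :=
    integrable_finsetSum _ fun f _ => (integrableOn_coord _ f hfin).mul_const (q f)
  have hI : ∫ D in stdSimp B, ∑ f, D f * q f ∂μH[(m : ℝ) - 1]
      = (1 / (m : ℝ)) * (∑ f, q f) * (μH[(m : ℝ) - 1] (stdSimp B)).toReal := by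
    rw [integral_finsetSum _ fun f _ => (integrableOn_coord _ f hfin).mul_const (q f)]
    simp only [integral_mul_const]
    rw [Finset.mul_sum, Finset.sum_mul]
    refine Finset.sum_congr rfl fun f _ => ?_
    rw [← card_mul_setIntegral_coord _ f hfin, hm]
    field_simp
  have hmarkov := mul_meas_ge_le_integral_of_nonneg
    (μ := μH[(m : ℝ) - 1].restrict (stdSimp B)) (f := fun D => ∑ f, D f * q f)
    (by
      filter_upwards [ae_restrict_mem (measurableSet_stdSimp B)] with D hD
      exact Finset.sum_nonneg fun f _ => mul_nonneg (hD.1 f) (hq0 f)) hint qmin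
  rw [hI, measureReal_restrict_apply' (measurableSet_stdSimp B)] at hmarkov
  have hGle : (μH[(m : ℝ) - 1] G).toReal ≤ μH[(m : ℝ) - 1].real
      ({D : EuclideanSpace ℝ B | qmin ≤ ∑ f, D f * q f} ∩ stdSimp B) := by
    refine measureReal_mono ?_ (measure_ne_top_of_subset Set.inter_subset_right hfin)
    rintro D hD
    rw [hG] at hD
    have := hD.2
    exact ⟨by simp only [Set.mem_ofPred_eq]; linarith, hD.1⟩
  rw [div_le_div_iff₀ hpos hqpos]
  calc _ ≤ _ := mul_le_mul_of_nonneg_right hGle hqpos.le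
    _ ≤ _ := by rw [mul_comm]; exact hmarkov
end

section
/- Upper bound on entropic expressivity given bias: Let P be a probability distribution on a finite set Ω with |Ω| = n, let t ⊆ Ω with |t| = k where 1 ≤ k < n, let p = k/n, and suppose ∑_{ω∈t} P(ω) = p + ε with 0 < p + ε < 1. Then the Shannon entropy (base 2) of P satisfies H(P) ≤ (p + ε)·log₂(k/(p + ε)) + (1 − (p + ε))·log₂((n − k)/(1 − (p + ε))). -/
/-!
The entropy splits as a sum over `t` and a sum over its complement. Among nonnegative functions with
total mass `m` on a finite set of size `c`, the partial entropy is largest for the constant `m / c`,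
where it equals `m * log₂ (c / m)`; this is `neg_sum_mul_logb_le`, a form of Gibbs' inequality
obtained by summing `x - 1 ≤ x * log x` at `x = P ω * c / m`. It is applied to `t` with mass `p + ε`
and to `tᶜ` with mass `1 - (p + ε)`.
-/

/-- The partial entropy of a nonnegative function of total mass `m` on `s` is at most that of the
constant function `m / #s`. -/
theorem neg_sum_mul_logb_le {Ω : Type*} (s : Finset Ω) (P : Ω → ℝ) (hP0 : ∀ ω, 0 ≤ P ω)
    (m : ℝ) (hm : 0 < m) (hs : ∑ ω ∈ s, P ω = m) :
    -∑ ω ∈ s, P ω * Real.logb 2 (P ω) ≤ m * Real.logb 2 ((s.card : ℝ) / m) := by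
  have hne : s.Nonempty := by
    rw [Finset.nonempty_iff_ne_empty]
    rintro rfl
    simp at hs
    linarith
  have hc : (0 : ℝ) < s.card := by exact_mod_cast hne.card_pos
  have hlog : 0 < Real.log 2 := Real.log_pos (by norm_num)
  have hpt : ∀ ω ∈ s, P ω - m / s.card
      ≤ P ω * Real.log (P ω) + P ω * Real.log ((s.card : ℝ) / m) := by
    intro ω _
    rcases (hP0 ω).eq_or_lt with h | h
    · rw [← h]
      have : 0 < m / s.card := by positivity
      simp only [zero_mul]
      linarith
    · have hx := Real.self_sub_one_le_mul_log (x := P ω * (s.card / m)) (by positivity)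
      rw [Real.log_mul h.ne' (by positivity)] at hx
      have := mul_le_mul_of_nonneg_left hx (show 0 ≤ m / s.card by positivity)
      field_simp at this ⊢
      linarith
  have hsum := Finset.sum_le_sum hpt
  rw [Finset.sum_sub_distrib, Finset.sum_add_distrib, ← Finset.sum_mul, hs, Finset.sum_const,
    nsmul_eq_mul, mul_div_cancel₀ _ hc.ne', sub_self] at hsum
  simp only [Real.logb, ← mul_div_assoc, ← Finset.sum_div]
  rw [← neg_div]
  gcongr
  linarith

/-- **Upper bound on entropic expressivity given bias.**
If a probability distribution `P` on a finite set `Ω` of size `n` places total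
mass `p + ε` on a target set `t` of size `k` (where `1 ≤ k < n`, `p = k/n`,
`0 < p + ε < 1`), then its Shannon entropy (base 2) is at most
`(p+ε)·log₂(k/(p+ε)) + (1-(p+ε))·log₂((n-k)/(1-(p+ε)))`. -/
theorem entropic_expressivity_upper_bound
    {Ω : Type*} [Fintype Ω] (n : ℕ) (hn : Fintype.card Ω = n)
    (P : Ω → ℝ) (hP0 : ∀ ω, 0 ≤ P ω) (hP1 : ∑ ω, P ω = 1)
    (t : Finset Ω) (k : ℕ) (hk : t.card = k)
    (hk1 : 1 ≤ k) (hk2 : k < n)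
    (p ε : ℝ) (hp : p = (k : ℝ) / (n : ℝ))
    (hmass : ∑ ω ∈ t, P ω = p + ε)
    (h0 : 0 < p + ε) (h1 : p + ε < 1) :
    -∑ ω, P ω * Real.logb 2 (P ω)
      ≤ (p + ε) * Real.logb 2 ((k : ℝ) / (p + ε))
        + (1 - (p + ε)) * Real.logb 2 (((n : ℝ) - (k : ℝ)) / (1 - (p + ε))) := by
  classical
  have hc : ∑ ω ∈ tᶜ, P ω = 1 - (p + ε) := by
    rw [← hP1, ← Finset.sum_add_sum_compl t P, hmass]
    ring
  have hcard : ((tᶜ.card : ℕ) : ℝ) = (n : ℝ) - k := by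
    rw [Finset.card_compl, hn, hk, Nat.cast_sub hk2.le]
  have ht := neg_sum_mul_logb_le t P hP0 _ h0 hmass
  have htc := neg_sum_mul_logb_le tᶜ P hP0 _ (sub_pos.2 h1) hc
  rw [hk] at ht
  rw [hcard] at htc
  rw [← Finset.sum_add_sum_compl t]
  linarith
end

section
/- Bias-Expressivity Trade-off: Let D be a probability distribution over a set of information resources, let t ⊆ Ω be a fixed target set with |t| = k and p = k/|Ω|, and let P̄_D = E_{F∼D}[P̄_F] be the expected averaged probability distribution on Ω. Then bias(D, t)² ≤ (1/2)·D_KL(P̄_D ∥ U) = (1/2)·(log₂|Ω| − H(P̄_D)), where U is the uniform distribution on Ω; equivalently, the entropic expressivity satisfies H(P̄_D) ≤ log₂|Ω| − 2·bias(D, t)², and bias(D, t) ≤ √((1/2)(log₂|Ω| − H(P̄_D))). -/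
/-!
The bias inequality is Pinsker's inequality for the event `t`, and it follows from the variational
form of relative entropy. For every `g : Ω → ℝ`, the divergence in nats satisfies
`∑ Q log (n Q) ≥ ∑ Q g - log ((1 / n) ∑ exp g)`. Take `g = s • 1_t`. Hoeffding's lemma for the
indicator of `t` under the uniform distribution bounds the last term by `s p + s² / 8`, so the
divergence is at least `s * bias - s² / 8`, and `s = 4 * bias` gives `2 * bias²`.
The divergence in bits is at least the one in nats because `0 < log 2 ≤ 1`.

The Gibbs step is `mul_log_ge_tangent` summed over `Ω`, and `uniform_indicator_hoeffding` is
the Hoeffding step.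
-/

open MeasureTheory

/-- The convex function `q ↦ q log q` lies above its tangent line at `exp y`, which is
`q ↦ q * y + q - exp y`. -/
lemma mul_log_ge_tangent {q : ℝ} (hq : 0 ≤ q) (y : ℝ) :
    q * y + q - Real.exp y ≤ q * Real.log q := by
  rcases hq.eq_or_lt with rfl | hq
  · simp [(Real.exp_pos y).le]
  · have h := Real.log_le_sub_one_of_pos (div_pos (Real.exp_pos y) hq)
    rw [Real.log_div (Real.exp_pos y).ne' hq.ne', Real.log_exp] at h
    have h2 := mul_le_mul_of_nonneg_left h hq.le
    have h3 : q * (Real.exp y / q - 1) = Real.exp y - q := by field_simp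
    linarith

open Classical in
/-- Hoeffding's lemma for the indicator of `t` under the uniform distribution on `Ω`. -/
lemma uniform_indicator_hoeffding {Ω : Type*} [Fintype Ω] [Nonempty Ω] (t : Finset Ω) (s : ℝ) :
    ∑ ω, Real.exp (if ω ∈ t then s else 0) / Fintype.card Ω
      ≤ Real.exp (s * (t.card / Fintype.card Ω) + s ^ 2 / 8) := by
  let _ : MeasurableSpace Ω := ⊤
  have : MeasurableSingletonClass Ω := ⟨fun _ => trivial⟩
  let μ : Measure Ω := (PMF.uniformOfFintype Ω).toMeasure
  let X : Ω → ℝ := fun ω => if ω ∈ t then 1 else 0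
  have hmean : ∫ ω, X ω ∂μ = t.card / Fintype.card Ω := by
    rw [PMF.integral_eq_sum]
    simp [X, div_eq_mul_inv]
  have hX : ∀ᵐ ω ∂μ, X ω ∈ Set.Icc (0 : ℝ) 1 := by
    refine Filter.Eventually.of_forall fun ω => ?_
    by_cases h : ω ∈ t <;> simp [X, h]
  have hH := (ProbabilityTheory.hasSubgaussianMGF_of_mem_Icc
    (measurable_from_top (f := X)).aemeasurable hX).mgf_le s
  rw [ProbabilityTheory.mgf, PMF.integral_eq_sum, hmean] at hH
  have hsum : ∑ ω, Real.exp (if ω ∈ t then s else 0) / Fintype.card Ω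
      = Real.exp (s * (t.card / Fintype.card Ω)) *
        ∑ ω, ((PMF.uniformOfFintype Ω) ω).toReal •
          Real.exp (s * (X ω - t.card / Fintype.card Ω)) := by
    rw [Finset.mul_sum]
    refine Finset.sum_congr rfl fun ω _ => ?_
    have he : Real.exp (if ω ∈ t then s else 0) = Real.exp (s * (t.card / Fintype.card Ω)) *
        Real.exp (s * (X ω - t.card / Fintype.card Ω)) := by
      rw [← Real.exp_add]
      congr 1
      by_cases h : ω ∈ t <;> simp only [X, h, if_true, if_false] <;> ring
    rw [he]
    simp [div_eq_mul_inv]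
    ring
  rw [hsum, Real.exp_add]
  refine mul_le_mul_of_nonneg_left (hH.trans (Real.exp_le_exp.2 (le_of_eq ?_)))
    (Real.exp_pos _).le
  norm_num
  ring

/-- Pinsker's inequality, in nats, for an event `t` and the uniform reference distribution. -/
lemma two_mul_sq_le_divergence {Ω : Type*} [Fintype Ω] (Q : Ω → ℝ) (hQ0 : ∀ ω, 0 ≤ Q ω)
    (hQ1 : ∑ ω, Q ω = 1) (t : Finset Ω) :
    2 * ((∑ ω ∈ t, Q ω) - t.card / Fintype.card Ω) ^ 2
      ≤ Real.log (Fintype.card Ω) + ∑ ω, Q ω * Real.log (Q ω) := by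
  classical
  have hne : Nonempty Ω := by
    by_contra h
    rw [not_nonempty_iff] at h
    simp at hQ1
  set b := (∑ ω ∈ t, Q ω) - (t.card : ℝ) / Fintype.card Ω with hb
  have hn : (0 : ℝ) < Fintype.card Ω := by exact_mod_cast Fintype.card_pos
  -- `s = 4 * b` maximises `s * b - s ^ 2 / 8`.
  set s := 4 * b with hs
  set c := s * ((t.card : ℝ) / Fintype.card Ω) + s ^ 2 / 8 with hc
  have hexp : ∑ ω, Real.exp ((if ω ∈ t then s else 0) - (Real.log (Fintype.card Ω) + c)) ≤ 1 := by
    have h := uniform_indicator_hoeffding t s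
    rw [← hc] at h
    have he : ∀ ω, Real.exp ((if ω ∈ t then s else 0) - (Real.log (Fintype.card Ω) + c))
        = Real.exp (if ω ∈ t then s else 0) / Fintype.card Ω / Real.exp c := by
      intro ω
      rw [Real.exp_sub, Real.exp_add, Real.exp_log hn, div_div]
    simp_rw [he]
    rw [← Finset.sum_div]
    exact (div_le_one (Real.exp_pos _)).2 h
  have hG := Finset.sum_le_sum fun ω (_ : ω ∈ Finset.univ) => mul_log_ge_tangent (hQ0 ω)
    ((if ω ∈ t then s else 0) - (Real.log (Fintype.card Ω) + c))
  have hlin : ∑ ω, Q ω * ((if ω ∈ t then s else 0) - (Real.log (Fintype.card Ω) + c))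
      = s * (∑ ω ∈ t, Q ω) - (Real.log (Fintype.card Ω) + c) := by
    simp_rw [mul_sub]
    rw [Finset.sum_sub_distrib, ← Finset.sum_mul, hQ1, one_mul]
    simp [Finset.sum_ite_mem, ← Finset.sum_mul, mul_comm]
  rw [Finset.sum_sub_distrib, Finset.sum_add_distrib, hlin, hQ1] at hG
  have hopt : s * (∑ ω ∈ t, Q ω) - c = 2 * b ^ 2 := by
    have : (∑ ω ∈ t, Q ω) = b + (t.card : ℝ) / Fintype.card Ω := by rw [hb]; ring
    rw [this, hc, hs]
    ring
  linarith

/-- **Bias-Expressivity Trade-off.**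
With `P̄_D = E_{F∼D}[P̄_F]` the expected averaged distribution on `Ω`,
`bias(D,t)² ≤ (1/2)·D_KL(P̄_D ∥ U) = (1/2)(log₂|Ω| - H(P̄_D))`; equivalently
`H(P̄_D) ≤ log₂|Ω| - 2·bias(D,t)²` and
`bias(D,t) ≤ √((1/2)(log₂|Ω| - H(P̄_D)))`.
(Here `D_KL(P ∥ U) = log₂|Ω| - H(P)` for the uniform distribution `U`.) -/
theorem bias_expressivity_tradeoff
    {Ω F : Type*} [Fintype Ω] [MeasurableSpace F]
    (Pbar : F → Ω → ℝ)
    (hP0 : ∀ f ω, 0 ≤ Pbar f ω)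
    (hP1 : ∀ f, ∑ ω, Pbar f ω = 1)
    (D : Measure F) [IsProbabilityMeasure D]
    (hint : ∀ ω, Integrable (fun f => Pbar f ω) D)
    (t : Finset Ω) (k : ℕ) (hk : t.card = k)
    (p : ℝ) (hp : p = (k : ℝ) / (Fintype.card Ω))
    (PbarD : Ω → ℝ) (hPbarD : ∀ ω, PbarD ω = ∫ f, Pbar f ω ∂D)
    (bias : ℝ) (hbias : bias = (∑ ω ∈ t, PbarD ω) - p)
    (HPD : ℝ) (hHPD : HPD = -∑ ω, PbarD ω * Real.logb 2 (PbarD ω)) :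
    bias ^ 2 ≤ (1 / 2) * (Real.logb 2 (Fintype.card Ω) - HPD)
    ∧ HPD ≤ Real.logb 2 (Fintype.card Ω) - 2 * bias ^ 2
    ∧ bias ≤ Real.sqrt ((1 / 2) * (Real.logb 2 (Fintype.card Ω) - HPD)) := by
  have hQ0 : ∀ ω, 0 ≤ PbarD ω := fun ω => by
    rw [hPbarD]
    exact integral_nonneg fun f => hP0 f ω
  have hQ1 : ∑ ω, PbarD ω = 1 := by
    simp_rw [hPbarD]
    rw [← integral_finsetSum _ fun ω _ => hint ω]
    simp [hP1]
  have hnat := two_mul_sq_le_divergence PbarD hQ0 hQ1 t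
  rw [hk, ← hp, ← hbias] at hnat
  have hl0 : 0 < Real.log 2 := Real.log_pos (by norm_num)
  have hl1 : Real.log 2 ≤ 1 := by linarith [Real.log_two_lt_d9]
  have hbits : Real.logb 2 (Fintype.card Ω) - HPD
      = (Real.log (Fintype.card Ω) + ∑ ω, PbarD ω * Real.log (PbarD ω)) / Real.log 2 := by
    rw [hHPD, sub_neg_eq_add, add_div, Finset.sum_div]
    simp only [Real.logb, mul_div_assoc]
  have hmain : 2 * bias ^ 2 ≤ Real.logb 2 (Fintype.card Ω) - HPD := by
    rw [hbits, le_div_iff₀ hl0]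
    exact (mul_le_of_le_one_right (by positivity) hl1).trans hnat
  have h1 : bias ^ 2 ≤ (1 / 2) * (Real.logb 2 (Fintype.card Ω) - HPD) := by linarith
  exact ⟨h1, by linarith, Real.le_sqrt_of_sq_le h1⟩
end

section
/- Expected-expressivity bound on bias: Let D be a probability distribution over a set of information resources and let t ⊆ Ω be a fixed target set with |t| = k and p = k/|Ω|. Then bias(D, t) ≤ √((1/2)(log₂|Ω| − E_{F∼D}[H(P̄_F)])) = √(E_{F∼D}[(1/2)·D_KL(P̄_F ∥ U)]), where U is the uniform distribution on Ω. In particular, E_{F∼D}[H(P̄_F)] ≤ H(E_{F∼D}[P̄_F]) ≤ log₂|Ω| − 2·bias(D, t)². -/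
/-!
The heart of the matter is Pinsker's inequality for a single event: a distribution `P` on `Ω`
with `|Ω| = n` satisfies `log n - H(P) ≥ 2 (P(t) - |t|/n)²` in nats. It is obtained from Gibbs'
inequality, comparing `P` with the exponentially tilted weights
`Q ω = exp (s (1_t ω - p) - s²/8) / n`, whose total mass is at most `1` by Hoeffding's lemma for
a Bernoulli(`p`) variable; the choice `s = 4 (P(t) - p)` is optimal. Passing to base `2` divides
the divergence by `log 2 < 1`, which only helps.

Applied to the averaged distribution this gives the upper bound on its entropy. Jensen's
inequality for the concave function `x ↦ -x log x` gives `E[H(P̄_F)] ≤ H(E[P̄_F])`, and the bound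
on the bias follows by combining the two.
-/

open MeasureTheory

/-- Hoeffding's lemma for a centred Bernoulli variable. -/
lemma bernoulli_mgf_le (p : ℝ) (h0 : 0 ≤ p) (h1 : p ≤ 1) (s : ℝ) :
    p * Real.exp (s * (1 - p)) + (1 - p) * Real.exp (s * (0 - p)) ≤ Real.exp (s ^ 2 / 8) := by
  have h1' : 0 ≤ 1 - p := by linarith
  set μ : Measure ℝ := ENNReal.ofReal p • Measure.dirac 1 + ENNReal.ofReal (1 - p) • Measure.dirac 0
    with hμ
  have : IsProbabilityMeasure μ := ⟨by
    simp [hμ, ← ENNReal.ofReal_add h0 h1']⟩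
  have key : ∀ g : ℝ → ℝ, ∫ x, g x ∂μ = p * g 1 + (1 - p) * g 0 := fun g => by
    rw [hμ, integral_add_measure, integral_smul_measure, integral_smul_measure, integral_dirac,
      integral_dirac, ENNReal.toReal_ofReal h0, ENNReal.toReal_ofReal h1']
    · rfl
    · exact (integrable_dirac (by simp)).smul_measure ENNReal.ofReal_ne_top
    · exact (integrable_dirac (by simp)).smul_measure ENNReal.ofReal_ne_top
  have hmem : ∀ᵐ x ∂μ, (id x : ℝ) ∈ Set.Icc (0 : ℝ) 1 := by
    rw [hμ, ae_add_measure_iff]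
    constructor <;> refine Measure.ae_smul_measure ?_ _ <;> rw [ae_dirac_eq] <;> simp
  have h := (ProbabilityTheory.hasSubgaussianMGF_of_mem_Icc aemeasurable_id hmem).mgf_le s
  rw [ProbabilityTheory.mgf, key, key] at h
  convert h using 1
  · simp
  · congr 1
    simp
    ring

/-- Pinsker's inequality for the event `t` and the uniform reference distribution, in nats. -/
lemma sum_negMulLog_le {Ω : Type*} [Fintype Ω] (P : Ω → ℝ) (hP0 : ∀ ω, 0 ≤ P ω)
    (hP1 : ∑ ω, P ω = 1) (t : Finset Ω) :
    ∑ ω, Real.negMulLog (P ω) ≤ Real.log (Fintype.card Ω)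
      - 2 * (∑ ω ∈ t, P ω - (t.card : ℝ) / Fintype.card Ω) ^ 2 := by
  classical
  have hne : Nonempty Ω := by
    by_contra h
    rw [not_nonempty_iff] at h
    simp at hP1
  have hn : (0 : ℝ) < Fintype.card Ω := by exact_mod_cast Fintype.card_pos
  have hcard : (t.card : ℝ) ≤ Fintype.card Ω := by exact_mod_cast t.card_le_univ
  set n : ℝ := ((Fintype.card Ω : ℕ) : ℝ) with hn_def
  set p : ℝ := ((t.card : ℕ) : ℝ) / n with hp
  set b : ℝ := ∑ ω ∈ t, P ω - p with hb
  have hp0 : 0 ≤ p := by positivity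
  have hp1 : p ≤ 1 := by rw [hp, div_le_one hn]; exact hcard
  -- the exponent maximising `s * b - s ^ 2 / 8`
  set s : ℝ := 4 * b with hs
  let c : Ω → ℝ := fun ω => s * ((if ω ∈ t then 1 else 0) - p) - s ^ 2 / 8 - Real.log n
  have gibbs : ∀ ω, Real.negMulLog (P ω) ≤ Real.exp (c ω) - P ω - P ω * c ω := by
    intro ω
    rcases (hP0 ω).eq_or_lt with h | h
    · simp [← h, Real.exp_nonneg]
    · have h2 := Real.add_one_le_exp (c ω - Real.log (P ω))
      rw [Real.exp_sub, Real.exp_log h, le_div_iff₀ h] at h2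
      simp only [Real.negMulLog]
      linarith
  have hQ : ∑ ω, Real.exp (c ω) ≤ 1 := by
    have h1 : ∀ ω, Real.exp (c ω) = (Real.exp (s ^ 2 / 8))⁻¹ / n *
        ((if ω ∈ t then Real.exp (s * (1 - p)) - Real.exp (s * (0 - p)) else 0)
          + Real.exp (s * (0 - p))) := by
      intro ω
      simp only [c]
      rw [Real.exp_sub, Real.exp_sub, Real.exp_log hn]
      split_ifs <;> simp <;> field_simp
    simp_rw [h1]
    rw [← Finset.mul_sum, Finset.sum_add_distrib, Finset.sum_ite_mem, Finset.univ_inter]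
    simp only [Finset.sum_const, nsmul_eq_mul, Finset.card_univ]
    have h2 := bernoulli_mgf_le p hp0 hp1 s
    have ht : (t.card : ℝ) = p * n := by rw [hp]; field_simp
    rw [← hn_def, ht]
    have he := Real.exp_pos (s ^ 2 / 8)
    calc _ = (p * Real.exp (s * (1 - p)) + (1 - p) * Real.exp (s * (0 - p)))
          / Real.exp (s ^ 2 / 8) := by field_simp; ring
      _ ≤ 1 := (div_le_one he).2 h2
  have hc : ∑ ω, P ω * c ω = s * b - s ^ 2 / 8 - Real.log n := by
    have h1 : ∀ ω, P ω * c ω = s * (if ω ∈ t then P ω else 0)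
        - (s * p + s ^ 2 / 8 + Real.log n) * P ω := by
      intro ω
      simp only [c]
      split_ifs <;> ring
    simp_rw [h1]
    rw [Finset.sum_sub_distrib, ← Finset.mul_sum, ← Finset.mul_sum, hP1, Finset.sum_ite_mem,
      Finset.univ_inter, hb]
    ring
  have hsum := Finset.sum_le_sum fun ω (_ : ω ∈ Finset.univ) => gibbs ω
  rw [Finset.sum_sub_distrib, Finset.sum_sub_distrib, hP1, hc] at hsum
  rw [hs] at hsum
  nlinarith

lemma neg_sum_mul_logb_two {Ω : Type*} [Fintype Ω] (P : Ω → ℝ) :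
    -∑ ω, P ω * Real.logb 2 (P ω) = (∑ ω, Real.negMulLog (P ω)) / Real.log 2 := by
  rw [Finset.sum_div, ← Finset.sum_neg_distrib]
  refine Finset.sum_congr rfl fun ω _ => ?_
  simp only [Real.negMulLog, Real.logb]
  ring

/-- **Expected-expressivity bound on bias.**
`bias(D,t) ≤ √((1/2)(log₂|Ω| - E_{F∼D}[H(P̄_F)])) = √(E_{F∼D}[(1/2)·D_KL(P̄_F ∥ U)])`,
where `D_KL(P ∥ U) = log₂|Ω| - H(P)`.  In particular,
`E_{F∼D}[H(P̄_F)] ≤ H(E_{F∼D}[P̄_F]) ≤ log₂|Ω| - 2·bias(D,t)²`. -/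
theorem expected_entropic_expressivity_bound_on_bias
    {Ω F : Type*} [Fintype Ω] [MeasurableSpace F]
    (Pbar : F → Ω → ℝ)
    (hP0 : ∀ f ω, 0 ≤ Pbar f ω)
    (hP1 : ∀ f, ∑ ω, Pbar f ω = 1)
    (D : Measure F) [IsProbabilityMeasure D]
    (hint : ∀ ω, Integrable (fun f => Pbar f ω) D)
    (hintH : Integrable (fun f => -∑ ω, Pbar f ω * Real.logb 2 (Pbar f ω)) D)
    (t : Finset Ω) (k : ℕ) (hk : t.card = k)
    (p : ℝ) (hp : p = (k : ℝ) / (Fintype.card Ω))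
    (bias : ℝ) (hbias : bias = (∫ f, (∑ ω ∈ t, Pbar f ω) ∂D) - p)
    (PbarD : Ω → ℝ) (hPbarD : ∀ ω, PbarD ω = ∫ f, Pbar f ω ∂D)
    (EH : ℝ) (hEH : EH = ∫ f, (-∑ ω, Pbar f ω * Real.logb 2 (Pbar f ω)) ∂D) :
    bias ≤ Real.sqrt ((1 / 2) * (Real.logb 2 (Fintype.card Ω) - EH))
    ∧ Real.sqrt ((1 / 2) * (Real.logb 2 (Fintype.card Ω) - EH))
        = Real.sqrt (∫ f, (1 / 2) * (Real.logb 2 (Fintype.card Ω)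
            - (-∑ ω, Pbar f ω * Real.logb 2 (Pbar f ω))) ∂D)
    ∧ EH ≤ -∑ ω, PbarD ω * Real.logb 2 (PbarD ω)
    ∧ -∑ ω, PbarD ω * Real.logb 2 (PbarD ω)
        ≤ Real.logb 2 (Fintype.card Ω) - 2 * bias ^ 2 := by
  have hle1 : ∀ f ω, Pbar f ω ≤ 1 := fun f ω => by
    rw [← hP1 f]
    exact Finset.single_le_sum (fun i _ => hP0 f i) (Finset.mem_univ ω)
  have hD0 : ∀ ω, 0 ≤ PbarD ω := fun ω => by
    rw [hPbarD]
    exact integral_nonneg fun f => hP0 f ω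
  have hD1 : ∑ ω, PbarD ω = 1 := by
    simp_rw [hPbarD]
    rw [← integral_finsetSum _ fun ω _ => hint ω]
    simp [hP1]
  have hb : bias = ∑ ω ∈ t, PbarD ω - (t.card : ℝ) / Fintype.card Ω := by
    rw [hbias, hp, hk, integral_finsetSum _ fun ω _ => hint ω]
    simp_rw [hPbarD]
  have hl2 : 0 < Real.log 2 := Real.log_pos one_lt_two
  have hl2' : Real.log 2 ≤ 1 := by linarith [Real.log_two_lt_d9]
  have hupper : -∑ ω, PbarD ω * Real.logb 2 (PbarD ω)
      ≤ Real.logb 2 (Fintype.card Ω) - 2 * bias ^ 2 := by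
    rw [neg_sum_mul_logb_two, Real.logb, div_le_iff₀ hl2, sub_mul, div_mul_cancel₀ _ hl2.ne']
    have h := sum_negMulLog_le PbarD hD0 hD1 t
    rw [← hb] at h
    nlinarith [mul_le_mul_of_nonneg_left hl2' (sq_nonneg bias)]
  -- `x ↦ -x log x` is bounded on `[0, 1]`, so each summand of the entropy is integrable
  have hintN : ∀ ω, Integrable (fun f => Real.negMulLog (Pbar f ω)) D := fun ω => by
    refine Integrable.of_bound
      (Real.continuous_negMulLog.comp_aestronglyMeasurable (hint ω).aestronglyMeasurable) 1
      (Filter.Eventually.of_forall fun f => ?_)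
    rw [Real.norm_of_nonneg (Real.negMulLog_nonneg (hP0 f ω) (hle1 f ω))]
    linarith [Real.negMulLog_le_one_sub_self (hP0 f ω), hP0 f ω]
  have hjensen : EH ≤ -∑ ω, PbarD ω * Real.logb 2 (PbarD ω) := by
    rw [hEH]
    simp_rw [neg_sum_mul_logb_two]
    rw [integral_div, integral_finsetSum _ fun ω _ => hintN ω]
    refine div_le_div_of_nonneg_right (Finset.sum_le_sum fun ω _ => ?_) hl2.le
    rw [hPbarD]
    exact Real.concaveOn_negMulLog.le_map_integral Real.continuous_negMulLog.continuousOn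
      isClosed_Ici (Filter.Eventually.of_forall fun f => hP0 f ω) (hint ω) (hintN ω)
  refine ⟨Real.le_sqrt_of_sq_le (by linarith), ?_, hjensen, hupper⟩
  rw [integral_const_mul, integral_sub (integrable_const _) hintH, ← hEH]
  simp
end
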